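/- arXiv:2306.06187 — 2 statements merged into one kernel-verified Lean document; each statement's English description precedes it below -/
import Mathlib

section
/- Let n ≥ 3, let F ⊂ ℝⁿ be compact and n-2 < s ≤ n. Then Cap_{n-2}(F) ≥ c(s,n) · (ℋ^s_∞(F))^{(n-2)/s}, where ℋ^s_∞ denotes the s-dimensional Hausdorff content and Cap_{n-2} the Newtonian capacity. -/
open MeasureTheory Metric
open scoped ENNReal

/-- The `s`-dimensional Hausdorff content `ℋ^s_∞`. -/
noncomputable def hContent {X : Type*} [EMetricSpace X] (s : ℝ) (E : Set X) : ℝ≥0∞ :=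
  ⨅ (A : ℕ → Set X) (_ : E ⊆ ⋃ i, A i), ∑' i, EMetric.diam (A i) ^ s

/-- The constant `c_n = (n-2) ℋ^{n-1}(𝕊^{n-1})` in the fundamental solution of `-Δ` in `ℝⁿ`. -/
noncomputable def newtKernelConst (n : ℕ) : ℝ≥0∞ :=
  ((n : ℝ≥0∞) - 2) * μH[(n : ℝ) - 1] (sphere (0 : EuclideanSpace ℝ (Fin n)) 1)

/-- The energy `I_{n-2}(μ) = ∬ c_n |x-y|^{-(n-2)} dμ(x) dμ(y)` of a measure,
for the kernel given by the fundamental solution of the Laplacian in `ℝⁿ`. -/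
noncomputable def newtEnergy (n : ℕ) {m : ℕ} (μ : Measure (EuclideanSpace ℝ (Fin m))) : ℝ≥0∞ :=
  ∫⁻ x, ∫⁻ y, newtKernelConst n * edist x y ^ (-((n : ℝ) - 2)) ∂μ ∂μ

/-- The Newtonian capacity `Cap_{n-2}(F) = (inf_{μ ∈ M₁(F)} I_{n-2}(μ))⁻¹`, the infimum
being over probability measures supported on `F`. -/
noncomputable def newtCap (n : ℕ) {m : ℕ} (F : Set (EuclideanSpace ℝ (Fin m))) : ℝ≥0∞ :=
  (⨅ (μ : Measure (EuclideanSpace ℝ (Fin m))) (_ : IsProbabilityMeasure μ) (_ : μ Fᶜ = 0),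
    newtEnergy n μ)⁻¹

/-! Call `weightedContent s f` the least cost `∑ w r ^ s` of a weighted family of balls whose
density dominates `f`. If the density is at least `m` on `E`, Vitali's lemma selects disjoint
balls whose fivefold enlargements cover `E`; removing a common weight `ε` from them lowers the
density by at most `ε` and costs at least `10 ^ (-s) ε ℋ^s_∞(E)`. Peeling off such layers until
`m` is used up shows that the weighted content of the constant `1` is at least `10 ^ (-s) ℋ^s_∞`.
As weighted content is sublinear, Hahn–Banach and Riesz–Markov–Kakutani turn it into a Frostman
measure: total mass at least `10 ^ (-s) ℋ^s_∞(F)` and `μ (B(x, r)) ≤ (2 r) ^ s`. For `a < s`, the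
layer-cake formula bounds its potential `∫ |x - y| ^ (-a) dμ(y)` uniformly, hence its energy.

The constant `c_n` is finite because stereographic projection covers the sphere by two Lipschitz
images of balls of dimension `n - 1`, and positive because orthogonal projection maps the sphere
onto such a ball. -/

open Set Filter Topology Module
open scoped NNReal CompactlySupported RealInnerProductSpace

section HausdorffContent

variable {X Y : Type*} [EMetricSpace X] [EMetricSpace Y] {s : ℝ}

lemma hContent_le_sum_ediam_rpow {ι : Type*} (hs : 0 < s) {E : Set X} (t : Finset ι)
    {A : ι → Set X} (hE : E ⊆ ⋃ i ∈ t, A i) : hContent s E ≤ ∑ i ∈ t, ediam (A i) ^ s := by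
  classical
  let B : ℕ → Set X := fun k => if h : k < t.card then A (t.equivFin.symm ⟨k, h⟩) else ∅
  have hEB : E ⊆ ⋃ k, B k := fun x hx => by
    obtain ⟨i, hi, hxi⟩ := mem_iUnion₂.1 (hE hx)
    exact mem_iUnion.2 ⟨t.equivFin ⟨i, hi⟩, by simpa [B] using hxi⟩
  calc hContent s E ≤ ∑' k, ediam (B k) ^ s := iInf₂_le B hEB
    _ = ∑ k ∈ Finset.range t.card, ediam (B k) ^ s :=
      tsum_eq_sum fun k hk => by simp [B, Finset.mem_range.not.1 hk, hs]
    _ = ∑ i ∈ t, ediam (A i) ^ s := by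
      rw [Finset.sum_range, ← Finset.sum_coe_sort t]
      exact Fintype.sum_equiv t.equivFin.symm _ _ fun k => by simp [B]

lemma hContent_image_le_of_isometry {f : X → Y} (hf : Isometry f) (s : ℝ) (E : Set X) :
    hContent s (f '' E) ≤ hContent s E :=
  le_iInf₂ fun A hA => iInf₂_le_of_le (fun k => f '' A k)
    (by simpa only [image_iUnion] using image_mono hA)
    (ENNReal.tsum_le_tsum fun k => (congrArg (· ^ s) (hf.ediam_image (A k))).le)

lemma hContent_ne_top_of_isBounded {Z : Type*} [MetricSpace Z] (hs : 0 < s) {E : Set Z}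
    (hE : Bornology.IsBounded E) : hContent s E ≠ ⊤ := by
  have h := hContent_le_sum_ediam_rpow hs ({0} : Finset ℕ) (E := E) (A := fun _ => E) (by simp)
  rw [Finset.sum_singleton] at h
  exact ne_top_of_le_ne_top (ENNReal.rpow_ne_top_of_nonneg hs.le hE.ediam_ne_top) h

end HausdorffContent

section WeightedContent

/-- The density `∑ w_q 1_{B_q}` of a finite family of closed balls `B_q` with weights `w_q`, where
the ball with centre `x` and radius `r` is encoded by the pair `q = (x, r)`. -/
noncomputable def ballDensity {X : Type*} [MetricSpace X] :
    (X × ℝ≥0 →₀ ℝ≥0) →ₗ[ℝ≥0] X → ℝ≥0 :=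
  Finsupp.linearCombination ℝ≥0 fun q => (closedBall q.1 q.2).indicator 1

/-- The cost `∑ w_q r_q ^ s` of a finite family of closed balls of radii `r_q` with weights `w_q`,
in the encoding of `ballDensity`. -/
noncomputable def ballCost {X : Type*} (s : ℝ) : (X × ℝ≥0 →₀ ℝ≥0) →ₗ[ℝ≥0] ℝ≥0 :=
  Finsupp.linearCombination ℝ≥0 fun q => q.2 ^ s

/-- The weighted `s`-dimensional content of a function `f`: the least cost of a finite weighted
family of balls whose density dominates `f` (the junk value `0` if no family does). On a bounded
space it is sublinear among functions bounded above. -/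
noncomputable def weightedContent {X : Type*} [MetricSpace X] (s : ℝ) (f : X → ℝ) : ℝ :=
  ⨅ c : {c : X × ℝ≥0 →₀ ℝ≥0 // ∀ x, f x ≤ ballDensity c x}, (ballCost s c.1 : ℝ)

lemma ballCost_sum_single {X : Type*} (s : ℝ) (u : Finset (X × ℝ≥0)) :
    ballCost s (∑ q ∈ u, Finsupp.single q 1) = ∑ q ∈ u, q.2 ^ s := by
  simp [ballCost]

variable {X : Type*} [MetricSpace X] {s : ℝ}

lemma ballDensity_apply (c : X × ℝ≥0 →₀ ℝ≥0) (x : X) :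
    ballDensity c x = ∑ q ∈ c.support, c q * (closedBall q.1 q.2).indicator 1 x := by
  simp [ballDensity, Finsupp.linearCombination_apply, Finsupp.sum, Finset.sum_apply]

lemma ballDensity_sum_single (u : Finset (X × ℝ≥0)) (x : X) :
    ballDensity (∑ q ∈ u, Finsupp.single q 1) x
      = ∑ q ∈ u, (closedBall q.1 (q.2 : ℝ)).indicator 1 x := by
  simp [ballDensity, Finset.sum_apply]

lemma ballDensity_sum_single_le_one {u : Finset (X × ℝ≥0)}
    (hu : (u : Set (X × ℝ≥0)).PairwiseDisjoint fun q => closedBall q.1 (q.2 : ℝ)) (x : X) :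
    ballDensity (∑ q ∈ u, Finsupp.single q 1) x ≤ 1 := by
  classical
  rw [ballDensity_sum_single]
  simp only [indicator_apply, Pi.one_apply, Finset.sum_boole]
  exact_mod_cast Finset.card_le_one.2 fun p hp q hq => by
    rw [Finset.mem_filter] at hp hq
    exact hu.elim_set hp.1 hq.1 x hp.2 hq.2

lemma exists_pairwiseDisjoint_closedBall_five_mul_cover {t : Finset (X × ℝ≥0)} {E : Set X}
    (ht : E ⊆ ⋃ q ∈ t, closedBall q.1 (q.2 : ℝ)) :
    ∃ u ⊆ t, ((u : Set (X × ℝ≥0)).PairwiseDisjoint fun q => closedBall q.1 (q.2 : ℝ)) ∧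
      E ⊆ ⋃ q ∈ u, closedBall q.1 (5 * (q.2 : ℝ)) := by
  obtain ⟨u, hut, hdisj, hcov⟩ :=
    Vitali.exists_disjoint_subfamily_covering_enlargement_closedBall (t : Set (X × ℝ≥0))
      Prod.fst (fun q => q.2) (∑ q ∈ t, (q.2 : ℝ))
      (fun q hq => Finset.single_le_sum (f := fun q : X × ℝ≥0 => (q.2 : ℝ))
        (fun _ _ => NNReal.coe_nonneg _) hq) 5 (by norm_num)
  lift u to Finset (X × ℝ≥0) using t.finite_toSet.subset hut
  refine ⟨u, mod_cast hut, hdisj, fun x hx => ?_⟩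
  obtain ⟨q, hq, hxq⟩ := mem_iUnion₂.1 (ht hx)
  obtain ⟨p, hp, hqp⟩ := hcov q hq
  exact mem_iUnion₂.2 ⟨p, hp, hqp hxq⟩

lemma hContent_le_sum_of_five_mul_cover (hs : 0 < s) {E : Set X} {u : Finset (X × ℝ≥0)}
    (hu : E ⊆ ⋃ q ∈ u, closedBall q.1 (5 * (q.2 : ℝ))) :
    hContent s E ≤ 10 ^ s * ((∑ q ∈ u, q.2 ^ s : ℝ≥0) : ℝ≥0∞) := by
  refine (hContent_le_sum_ediam_rpow hs u hu).trans ?_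
  push_cast
  rw [Finset.mul_sum]
  refine Finset.sum_le_sum fun q _ => ?_
  have hdiam : ediam (closedBall q.1 (5 * (q.2 : ℝ))) ≤ 10 * q.2 := by
    have h := ediam_closedEBall_le (x := q.1) (r := ((5 * q.2 : ℝ≥0) : ℝ≥0∞))
    rw [closedEBall_coe] at h
    refine h.trans_eq ?_
    push_cast
    rw [← mul_assoc]
    norm_num
  calc ediam (closedBall q.1 (5 * (q.2 : ℝ))) ^ s ≤ (10 * q.2) ^ s := by gcongr
    _ = 10 ^ s * ((q.2 ^ s : ℝ≥0) : ℝ≥0∞) := by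
      rw [ENNReal.mul_rpow_of_nonneg _ _ hs.le, ENNReal.coe_rpow_of_nonneg _ hs.le]

lemma subset_iUnion_support_of_ballDensity_pos {c : X × ℝ≥0 →₀ ℝ≥0} {E : Set X}
    (hc : ∀ x ∈ E, 0 < ballDensity c x) : E ⊆ ⋃ q ∈ c.support, closedBall q.1 (q.2 : ℝ) := by
  intro x hx
  have hpos := (hc x hx).ne'
  rw [ballDensity_apply] at hpos
  obtain ⟨q, hq, hqx⟩ := Finset.exists_ne_zero_of_sum_ne_zero hpos
  exact mem_iUnion₂.2 ⟨q, hq, mem_of_indicator_ne_zero (right_ne_zero_of_mul hqx)⟩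

/- The family `e` puts a uniform weight `ε` on a disjoint subfamily of the balls of `c` whose
fivefold enlargement still covers `E`; the largest admissible `ε ≤ m` exhausts the weight of one of
the balls, unless `ε = m`. -/
lemma exists_add_eq_mul_hContent_le_ballCost (hs : 0 < s) {E : Set X} {c : X × ℝ≥0 →₀ ℝ≥0}
    {m : ℝ≥0} (hm : 0 < m) (hc : ∀ x ∈ E, m ≤ ballDensity c x) :
    ∃ ε ≤ m, ∃ e d, c = e + d ∧ (ε = m ∨ d.support.card < c.support.card) ∧
      (∀ x, ballDensity e x ≤ ε) ∧ ε * hContent s E ≤ 10 ^ s * ballCost s e := by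
  classical
  obtain ⟨u, huc, hdisj, hcov⟩ := exists_pairwiseDisjoint_closedBall_five_mul_cover
    (subset_iUnion_support_of_ballDensity_pos fun x hx => hm.trans_le (hc x hx))
  obtain ⟨ε, hεm, hεc, hε⟩ : ∃ ε ≤ m, (∀ q ∈ u, ε ≤ c q) ∧ (ε = m ∨ ∃ q ∈ u, c q = ε) := by
    by_cases hmu : ∀ q ∈ u, m ≤ c q
    · exact ⟨m, le_rfl, hmu, Or.inl rfl⟩
    · push Not at hmu
      obtain ⟨q₁, hq₁, hq₁m⟩ := hmu
      obtain ⟨q₀, hq₀, hmin⟩ := u.exists_min_image c ⟨q₁, hq₁⟩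
      exact ⟨c q₀, (hmin q₁ hq₁).trans hq₁m.le, hmin, Or.inr ⟨q₀, hq₀, rfl⟩⟩
  obtain ⟨d, hd⟩ : ∃ d, c = ε • ∑ q ∈ u, Finsupp.single q 1 + d := by
    refine le_iff_exists_add.1 fun p => ?_
    by_cases hp : p ∈ u <;> simp [Finsupp.single_apply, hp, hεc]
  refine ⟨ε, hεm, _, d, hd, hε.imp_right ?_, fun x => ?_, ?_⟩
  · rintro ⟨q, hq, rfl⟩
    have hdq : d q = 0 := by
      simpa [Finsupp.finsetSum_apply, Finsupp.single_apply, hq] using DFunLike.congr_fun hd q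
    refine Finset.card_lt_card (Finset.ssubset_iff_of_subset ?_ |>.2 ⟨q, huc hq, by simpa⟩)
    exact Finsupp.support_mono (hd ▸ le_add_self)
  · rw [map_smul]
    exact mul_le_of_le_one_right' (ballDensity_sum_single_le_one hdisj x)
  · rw [map_smul, ballCost_sum_single, smul_eq_mul, ENNReal.coe_mul, mul_left_comm]
    gcongr
    exact hContent_le_sum_of_five_mul_cover hs hcov

lemma mul_hContent_le_ballCost (hs : 0 < s) {E : Set X} (c : X × ℝ≥0 →₀ ℝ≥0) (m : ℝ≥0)
    (hc : ∀ x ∈ E, m ≤ ballDensity c x) : m * hContent s E ≤ 10 ^ s * ballCost s c := by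
  induction hk : c.support.card using Nat.strong_induction_on generalizing c m with
  | _ k ih =>
  rcases eq_zero_or_pos m with rfl | hm
  · simp
  obtain ⟨ε, hεm, e, d, rfl, hd_card, he_le, he⟩ :=
    exists_add_eq_mul_hContent_le_ballCost hs hm hc
  have hd : (m - ε : ℝ≥0) * hContent s E ≤ 10 ^ s * ballCost s d := by
    rcases hd_card with rfl | hd_card
    · simp
    refine ih _ (hk ▸ hd_card) d _ (fun x hx => ?_) rfl
    rw [tsub_le_iff_left]
    calc m ≤ ballDensity (e + d) x := hc x hx
      _ = ballDensity e x + ballDensity d x := by rw [map_add, Pi.add_apply]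
      _ ≤ ε + ballDensity d x := by gcongr; exact he_le x
  calc m * hContent s E = ε * hContent s E + (m - ε : ℝ≥0) * hContent s E := by
        rw [← add_mul, ← ENNReal.coe_add, add_tsub_cancel_of_le hεm]
    _ ≤ 10 ^ s * ballCost s e + 10 ^ s * ballCost s d := add_le_add he hd
    _ = 10 ^ s * ballCost s (e + d) := by rw [map_add, ENNReal.coe_add, mul_add]

lemma exists_le_ballDensity [BoundedSpace X] {f : X → ℝ} (hf : BddAbove (range f)) :
    ∃ c, ∀ x, f x ≤ ballDensity c x := by
  rcases isEmpty_or_nonempty X with _ | ⟨⟨x₀⟩⟩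
  · exact ⟨0, fun x => isEmptyElim x⟩
  obtain ⟨M, hM⟩ := hf
  let d : ℝ≥0 := ⟨diam (univ : Set X), diam_nonneg⟩
  refine ⟨.single (x₀, d) M.toNNReal, fun x => ?_⟩
  have hx : x ∈ closedBall x₀ (d : ℝ) :=
    dist_le_diam_of_mem (Bornology.isBounded_univ.2 inferInstance) (mem_univ _) (mem_univ _)
  simpa [ballDensity, hx] using Or.inl (hM ⟨x, rfl⟩)

lemma weightedContent_le {f : X → ℝ} {c : X × ℝ≥0 →₀ ℝ≥0} (hc : ∀ x, f x ≤ ballDensity c x) :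
    weightedContent s f ≤ ballCost s c :=
  ciInf_le ⟨0, by rintro _ ⟨d, rfl⟩; exact NNReal.coe_nonneg _⟩
    (⟨c, hc⟩ : {c : X × ℝ≥0 →₀ ℝ≥0 // ∀ x, f x ≤ ballDensity c x})

lemma exists_ballCost_lt_of_weightedContent_lt [BoundedSpace X] {f : X → ℝ}
    (hf : BddAbove (range f)) {a : ℝ} (ha : weightedContent s f < a) :
    ∃ c, (∀ x, f x ≤ ballDensity c x) ∧ ballCost s c < a := by
  have : Nonempty {c : X × ℝ≥0 →₀ ℝ≥0 // ∀ x, f x ≤ ballDensity c x} :=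
    nonempty_subtype.2 (exists_le_ballDensity hf)
  obtain ⟨⟨c, hc⟩, hca⟩ := exists_lt_of_ciInf_lt ha
  exact ⟨c, hc, hca⟩

lemma weightedContent_add_le [BoundedSpace X] {f g : X → ℝ} (hf : BddAbove (range f))
    (hg : BddAbove (range g)) :
    weightedContent s (f + g) ≤ weightedContent s f + weightedContent s g := by
  refine le_of_forall_gt fun a ha => ?_
  obtain ⟨b, hfb, hgb⟩ : ∃ b, weightedContent s f < b ∧ weightedContent s g < a - b := by
    obtain ⟨b, hb⟩ := exists_between (lt_sub_iff_add_lt.2 ha)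
    exact ⟨b, hb.1, lt_sub_comm.1 hb.2⟩
  obtain ⟨c, hc, hcb⟩ := exists_ballCost_lt_of_weightedContent_lt hf hfb
  obtain ⟨d, hd, hdb⟩ := exists_ballCost_lt_of_weightedContent_lt hg hgb
  refine (weightedContent_le (c := c + d) fun x => ?_).trans_lt ?_
  · simpa using add_le_add (hc x) (hd x)
  · rw [map_add, NNReal.coe_add]
    linarith

lemma weightedContent_smul_le {a : ℝ} (ha : 0 < a) [BoundedSpace X] {f : X → ℝ}
    (hf : BddAbove (range f)) : weightedContent s (a • f) ≤ a * weightedContent s f := by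
  lift a to ℝ≥0 using ha.le
  refine le_of_forall_gt fun b hb => ?_
  obtain ⟨c, hc, hcb⟩ := exists_ballCost_lt_of_weightedContent_lt hf ((lt_div_iff₀' ha).2 hb)
  refine (weightedContent_le (c := a • c) fun x => ?_).trans_lt ?_
  · simpa using mul_le_mul_of_nonneg_left (hc x) a.coe_nonneg
  · simpa using (lt_div_iff₀' ha).1 hcb

lemma weightedContent_smul {a : ℝ} (ha : 0 < a) [BoundedSpace X] {f : X → ℝ}
    (hf : BddAbove (range f)) : weightedContent s (a • f) = a * weightedContent s f := by
  refine (weightedContent_smul_le ha hf).antisymm ?_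
  have haf : BddAbove (range (a • f)) := by
    simpa only [Pi.smul_def, ← range_smul] using hf.smul_of_nonneg ha.le
  have h := weightedContent_smul_le (s := s) (inv_pos.2 ha) haf
  rwa [inv_smul_smul₀ ha.ne', le_inv_mul_iff₀ ha] at h

lemma weightedContent_nonpos_of_nonpos {f : X → ℝ} (hf : ∀ x, f x ≤ 0) :
    weightedContent s f ≤ 0 := by
  simpa using weightedContent_le (s := s) (c := 0) (by simpa using hf)

lemma weightedContent_le_rpow {f : X → ℝ} {x : X} {r : ℝ} (hr : 0 ≤ r) (hf₁ : ∀ y, f y ≤ 1)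
    (hf₀ : ∀ y ∉ closedBall x r, f y ≤ 0) : weightedContent s f ≤ r ^ s := by
  lift r to ℝ≥0 using hr
  have h := weightedContent_le (s := s) (f := f) (c := .single (x, r) 1) fun y => by
    by_cases hy : y ∈ closedBall x r
    · simpa [ballDensity, hy] using hf₁ y
    · simpa [ballDensity, hy] using hf₀ y hy
  simpa [ballCost] using h

lemma hContent_univ_le_weightedContent_one [BoundedSpace X] (hs : 0 < s) :
    hContent s (univ : Set X) ≤ 10 ^ s * ENNReal.ofReal (weightedContent s (1 : X → ℝ)) := by
  have h10 : (10 : ℝ≥0∞) ^ s ≠ 0 := by simp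
  have h10' : (10 : ℝ≥0∞) ^ s ≠ ⊤ := by simp
  obtain ⟨h, hh⟩ : ∃ h : ℝ≥0, hContent s (univ : Set X) = 10 ^ s * h := by
    have hfin := hContent_ne_top_of_isBounded hs (Bornology.isBounded_univ.2 ‹BoundedSpace X›)
    lift hContent s (univ : Set X) / 10 ^ s to ℝ≥0 using ENNReal.div_ne_top hfin h10 with h hh
    exact ⟨h, by rw [hh, ENNReal.mul_div_cancel h10 h10']⟩
  have : Nonempty {c : X × ℝ≥0 →₀ ℝ≥0 // ∀ x, (1 : X → ℝ) x ≤ ballDensity c x} :=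
    nonempty_subtype.2 (exists_le_ballDensity ⟨1, by rintro _ ⟨x, rfl⟩; exact le_rfl⟩)
  rw [hh, ← ENNReal.ofReal_coe_nnreal]
  gcongr
  refine le_ciInf fun ⟨c, hc⟩ => ?_
  have hc' := mul_hContent_le_ballCost (E := univ) hs c 1 fun x _ => by exact_mod_cast hc x
  rw [ENNReal.coe_one, one_mul, hh, ENNReal.mul_le_mul_iff_right h10 h10'] at hc'
  exact_mod_cast hc'

end WeightedContent

section Frostman

lemma exists_linearMap_apply_eq_le_sublinear {E : Type*} [AddCommGroup E] [Module ℝ E] {N : E → ℝ}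
    (N_hom : ∀ c : ℝ, 0 < c → ∀ x, N (c • x) = c * N x) (N_add : ∀ x y, N (x + y) ≤ N x + N y)
    (x₀ : E) : ∃ L : E →ₗ[ℝ] ℝ, L x₀ = N x₀ ∧ ∀ x, L x ≤ N x := by
  have N_zero : N 0 = 0 := by
    have := N_hom 2 two_pos 0
    rw [smul_zero] at this
    linarith
  have smul_le (a : ℝ) : a * N x₀ ≤ N (a • x₀) := by
    rcases lt_trichotomy a 0 with ha | rfl | ha
    · have h := N_add (a • x₀) (-a • x₀)
      rw [← add_smul, add_neg_cancel, zero_smul, N_zero, N_hom (-a) (neg_pos.2 ha)] at h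
      linarith
    · simp [N_zero]
    · exact (N_hom a ha x₀).ge
  have h_zero (c : ℝ) (hc : c • x₀ = 0) : c • N x₀ = 0 := by
    rcases smul_eq_zero.1 hc with rfl | rfl <;> simp [N_zero]
  obtain ⟨L, hL, hLN⟩ := exists_extension_of_le_sublinear
    (LinearPMap.mkSpanSingleton' (σ := RingHom.id ℝ) x₀ (N x₀) h_zero) N N_hom N_add <| by
      rintro ⟨x, hx⟩
      obtain ⟨a, rfl⟩ := Submodule.mem_span_singleton.1 hx
      rw [LinearPMap.mkSpanSingleton'_apply]
      exact smul_le a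
  exact ⟨L, (hL ⟨x₀, Submodule.mem_span_singleton_self x₀⟩).trans
    (LinearPMap.mkSpanSingleton'_apply_self ..), hLN⟩

variable {X : Type*} [MetricSpace X]

lemma exists_positiveLinearMap_apply_eq_le_weightedContent [CompactSpace X] (s : ℝ)
    (g : C_c(X, ℝ)) :
    ∃ Λ : C_c(X, ℝ) →ₚ[ℝ] ℝ, Λ g = weightedContent s g ∧ ∀ f, Λ f ≤ weightedContent s f := by
  have hbdd (f : C_c(X, ℝ)) : BddAbove (range f) := (isCompact_range f.continuous).bddAbove
  obtain ⟨L, hLg, hL⟩ := exists_linearMap_apply_eq_le_sublinear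
    (N := fun f : C_c(X, ℝ) => weightedContent s f)
    (fun a ha f => by
      rw [CompactlySupportedContinuousMap.coe_smul]; exact weightedContent_smul ha (hbdd f))
    (fun f g => by
      rw [CompactlySupportedContinuousMap.coe_add]
      exact weightedContent_add_le (hbdd f) (hbdd g)) g
  have hL_nonneg (f : C_c(X, ℝ)) (hf : 0 ≤ f) : 0 ≤ L f := by
    have h := (hL (-f)).trans (weightedContent_nonpos_of_nonpos fun x => neg_nonpos.2 (hf x))
    rwa [map_neg, neg_nonpos] at h
  exact ⟨PositiveLinearMap.mk₀ L hL_nonneg, hLg, hL⟩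

variable [MeasurableSpace X] [BorelSpace X] {s : ℝ}

theorem exists_frostman_measure_univ [CompactSpace X] (hs : 0 < s) :
    ∃ μ : Measure X, hContent s (univ : Set X) ≤ 10 ^ s * μ univ ∧ μ univ ≠ ⊤ ∧
      ∀ (x : X) (r : ℝ), 0 < r → μ (closedBall x r) ≤ ENNReal.ofReal ((2 * r) ^ s) := by
  let one : C_c(X, ℝ) := CompactlySupportedContinuousMap.continuousMapEquiv 1
  obtain ⟨Λ, hΛ_one, hΛ⟩ := exists_positiveLinearMap_apply_eq_le_weightedContent s one
  refine ⟨RealRMK.rieszMeasure Λ, ?_, ?_, fun x r hr => ?_⟩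
  · refine (hContent_univ_le_weightedContent_one hs).trans ?_
    gcongr
    exact hΛ_one ▸ RealRMK.le_rieszMeasure_tsupport_subset Λ
      (fun x => ⟨zero_le_one, le_rfl⟩) (subset_univ _)
  · exact ne_top_of_le_ne_top ENNReal.ofReal_ne_top (RealRMK.rieszMeasure_le_of_eq_one Λ (f := one)
      (fun _ => zero_le_one) isCompact_univ fun _ _ => rfl)
  · obtain ⟨f, hf₀, hf₁, hf⟩ := exists_continuous_zero_one_of_isClosed
      (isOpen_ball (x := x) (ε := 2 * r)).isClosed_compl (isClosed_closedBall (x := x) (ε := r))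
      (disjoint_compl_left_iff_subset.2 (closedBall_subset_ball (by linarith)))
    refine (RealRMK.rieszMeasure_le_of_eq_one Λ
      (f := CompactlySupportedContinuousMap.continuousMapEquiv f)
      (fun y => (hf y).1) isClosed_closedBall.isCompact hf₁).trans ?_
    refine ENNReal.ofReal_le_ofReal ((hΛ _).trans
      (weightedContent_le_rpow (x := x) (by positivity) (fun y => (hf y).2) fun y hy => ?_))
    exact (hf₀ fun hy' => hy (ball_subset_closedBall hy')).le

variable {F : Set X}

theorem exists_frostman_measure (hs : 0 < s) (hF : IsCompact F) :
    ∃ μ : Measure X, μ Fᶜ = 0 ∧ hContent s F ≤ 10 ^ s * μ univ ∧ μ univ ≠ ⊤ ∧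
      ∀ x ∈ F, ∀ r : ℝ, 0 < r → μ (closedBall x r) ≤ ENNReal.ofReal ((2 * r) ^ s) := by
  have : CompactSpace F := isCompact_iff_compactSpace.1 hF
  obtain ⟨μ, hμ, hμ_top, hμ_ball⟩ := exists_frostman_measure_univ (X := F) hs
  have hmap := (MeasurableEmbedding.subtype_coe hF.measurableSet).map_apply μ
  refine ⟨μ.map Subtype.val, ?_, ?_, ?_, fun x hx r hr => ?_⟩
  · rw [hmap, preimage_compl, Subtype.coe_preimage_self, compl_univ, measure_empty]
  · rw [hmap, preimage_univ]
    calc hContent s F = hContent s (Subtype.val '' (univ : Set F)) := by rw [Subtype.coe_image_univ]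
      _ ≤ hContent s (univ : Set F) := hContent_image_le_of_isometry isometry_subtype_coe s univ
      _ ≤ 10 ^ s * μ univ := hμ
  · rwa [hmap, preimage_univ]
  · rw [hmap]
    exact hμ_ball ⟨x, hx⟩ r hr

theorem exists_frostman_probabilityMeasure (hs : 0 < s) (hF : IsCompact F)
    (h₀ : hContent s F ≠ 0) :
    ∃ ν : Measure X, IsProbabilityMeasure ν ∧ ν Fᶜ = 0 ∧
      ∀ x ∈ F, ∀ r : ℝ, 0 < r →
        hContent s F * ν (closedBall x r) ≤ ENNReal.ofReal ((20 * r) ^ s) := by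
  obtain ⟨μ, hμF, hμ, hμ_top, hμ_ball⟩ := exists_frostman_measure hs hF
  have hμ₀ : μ univ ≠ 0 := fun h => h₀ (by simpa [h] using hμ)
  refine ⟨(μ univ)⁻¹ • μ, ⟨ENNReal.inv_mul_cancel hμ₀ hμ_top⟩, by simp [hμF], fun x hx r hr => ?_⟩
  calc hContent s F * ((μ univ)⁻¹ * μ (closedBall x r))
      ≤ 10 ^ s * μ univ * ((μ univ)⁻¹ * ENNReal.ofReal ((2 * r) ^ s)) := by
        gcongr
        exact hμ_ball x hx r hr
    _ = 10 ^ s * ENNReal.ofReal ((2 * r) ^ s) := by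
        rw [mul_assoc, ENNReal.mul_inv_cancel_left hμ₀ hμ_top]
    _ = ENNReal.ofReal ((20 * r) ^ s) := by
        rw [show 20 * r = 10 * (2 * r) by ring,
          Real.mul_rpow (x := 10) (by norm_num) (by positivity),
          ENNReal.ofReal_mul (by positivity), ← ENNReal.ofReal_rpow_of_pos (x := 10) (by norm_num),
          ENNReal.ofReal_ofNat]

end Frostman

section RieszPotential

lemma lintegral_Ioi_div_rpow_neg {T q : ℝ} (hT : 0 < T) (hq : 1 < q) :
    ∫⁻ t in Ioi T, ENNReal.ofReal ((t / T) ^ (-q)) = ENNReal.ofReal (T / (q - 1)) := by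
  have hpos {t : ℝ} (ht : t ∈ Ioi T) : 0 < t := hT.trans ht
  have hdiv : EqOn (fun t => (t / T) ^ (-q)) (fun t => t ^ (-q) / T ^ (-q)) (Ioi T) :=
    fun t ht => Real.div_rpow (hpos ht).le hT.le _
  rw [← ofReal_integral_eq_lintegral_ofReal]
  · congr 1
    rw [setIntegral_congr_fun measurableSet_Ioi hdiv, integral_div,
      integral_Ioi_rpow_of_lt (by linarith) hT, Real.rpow_add_one hT.ne']
    have := (Real.rpow_pos_of_pos hT (-q)).ne'
    have : q - 1 ≠ 0 := by linarith
    have : -q + 1 ≠ 0 := by linarith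
    field_simp
    ring
  · exact (integrableOn_congr_fun hdiv measurableSet_Ioi).2
      ((integrableOn_Ioi_rpow_of_lt (by linarith) hT).div_const _)
  · filter_upwards [ae_restrict_mem measurableSet_Ioi] with t ht
    have := hpos ht
    positivity

lemma lintegral_ofReal_le_of_meas_lt_le_rpow {α : Type*} [MeasurableSpace α] {ν : Measure α}
    [IsProbabilityMeasure ν] {f : α → ℝ} (hf : 0 ≤ᵐ[ν] f) (hfm : AEMeasurable f ν) {T q : ℝ}
    (hT : 0 < T) (hq : 1 < q)
    (hν : ∀ t, T < t → ν {y | t < f y} ≤ ENNReal.ofReal ((t / T) ^ (-q))) :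
    ∫⁻ y, ENNReal.ofReal (f y) ∂ν ≤ ENNReal.ofReal (q / (q - 1) * T) := by
  have hq' : 0 < q - 1 := by linarith
  calc ∫⁻ y, ENNReal.ofReal (f y) ∂ν
      = ∫⁻ t in Ioi 0, ν {y | t < f y} := lintegral_eq_lintegral_meas_lt ν hf hfm
    _ ≤ (∫⁻ t in Ioc 0 T, ν {y | t < f y}) + ∫⁻ t in Ioi T, ν {y | t < f y} := by
        rw [← Ioc_union_Ioi_eq_Ioi hT.le]
        exact lintegral_union_le _ _ _
    _ ≤ (∫⁻ _ in Ioc 0 T, 1) + ∫⁻ t in Ioi T, ENNReal.ofReal ((t / T) ^ (-q)) :=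
        add_le_add (lintegral_mono fun _ => prob_le_one) (setLIntegral_mono' measurableSet_Ioi hν)
    _ = ENNReal.ofReal T + ENNReal.ofReal (T / (q - 1)) := by
        rw [setLIntegral_one, Real.volume_Ioc, sub_zero, lintegral_Ioi_div_rpow_neg hT hq]
    _ = ENNReal.ofReal (q / (q - 1) * T) := by
        rw [← ENNReal.ofReal_add hT.le (by positivity)]
        congr 1
        field_simp
        ring

variable {X : Type*} [MetricSpace X] [MeasurableSpace X]

lemma measure_singleton_eq_zero_of_closedBall_le_rpow {ν : Measure X} {x : X} {s R : ℝ} (hs : 0 < s)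
    (hν : ∀ r, 0 < r → ν (closedBall x r) ≤ ENNReal.ofReal ((r / R) ^ s)) : ν {x} = 0 := by
  have hlim : Tendsto (fun r : ℝ => ENNReal.ofReal ((r / R) ^ s)) (𝓝[>] 0) (𝓝 0) := by
    have : ContinuousAt (fun r : ℝ => ENNReal.ofReal ((r / R) ^ s)) 0 :=
      ENNReal.continuous_ofReal.continuousAt.comp
        ((continuousAt_id.div_const R).rpow_const (.inr hs.le))
    simpa [ContinuousAt, hs.ne'] using this.tendsto.mono_left nhdsWithin_le_nhds
  refine le_bot_iff.1 (ge_of_tendsto hlim ?_)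
  filter_upwards [self_mem_nhdsWithin] with r hr
  exact (measure_mono (singleton_subset_iff.2 (mem_closedBall_self (le_of_lt hr)))).trans (hν r hr)

theorem lintegral_edist_rpow_neg_le_of_closedBall_le_rpow [BorelSpace X] {ν : Measure X}
    [IsProbabilityMeasure ν] {x : X} {a s R : ℝ} (ha : 0 < a) (has : a < s) (hR : 0 < R)
    (hν : ∀ r, 0 < r → ν (closedBall x r) ≤ ENNReal.ofReal ((r / R) ^ s)) :
    ∫⁻ y, edist x y ^ (-a) ∂ν ≤ ENNReal.ofReal (s / (s - a) * R ^ (-a)) := by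
  have hne : ∀ᵐ y ∂ν, y ≠ x := by
    have := measure_singleton_eq_zero_of_closedBall_le_rpow (ha.trans has) hν
    simpa [ae_iff] using this
  have hlt {t : ℝ} (ht : R ^ (-a) < t) :
      ν {y | t < dist x y ^ (-a)} ≤ ENNReal.ofReal ((t / R ^ (-a)) ^ (-(s / a))) := by
    have ht₀ : 0 < t := (by positivity : 0 < R ^ (-a)).trans ht
    have hsub : {y | t < dist x y ^ (-a)} ⊆ closedBall x (t ^ (-a)⁻¹) := fun y hy => by
      rw [mem_closedBall']
      rcases dist_nonneg.eq_or_lt' (a := dist x y) with hxy | hxy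
      · rw [hxy]; positivity
      · exact (Real.le_rpow_inv_iff_of_neg hxy ht₀ (neg_lt_zero.2 ha)).2 (le_of_lt hy)
    have hpow : t / R ^ (-a) = (t ^ (-a)⁻¹ / R) ^ (-a) := by
      rw [Real.div_rpow (by positivity) hR.le, Real.rpow_inv_rpow ht₀.le (neg_ne_zero.2 ha.ne')]
    refine (measure_mono hsub).trans ((hν _ (by positivity)).trans_eq ?_)
    rw [hpow, ← Real.rpow_mul (by positivity), neg_mul_neg, mul_div_cancel₀ _ ha.ne']
  calc ∫⁻ y, edist x y ^ (-a) ∂ν = ∫⁻ y, ENNReal.ofReal (dist x y ^ (-a)) ∂ν := by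
        refine lintegral_congr_ae ?_
        filter_upwards [hne] with y hy
        rw [edist_dist, ENNReal.ofReal_rpow_of_pos (dist_pos.2 hy.symm)]
    _ ≤ ENNReal.ofReal (s / a / (s / a - 1) * R ^ (-a)) :=
        lintegral_ofReal_le_of_meas_lt_le_rpow (ae_of_all _ fun y => by positivity)
          (by fun_prop) (by positivity) ((one_lt_div ha).2 has) fun t ht => hlt ht
    _ = ENNReal.ofReal (s / (s - a) * R ^ (-a)) := by
        congr 2
        field_simp

end RieszPotential

section RieszCapacity

variable {X : Type*} [MetricSpace X] [MeasurableSpace X]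

/-- The energy `∬ |x-y|^{-a} dμ(x) dμ(y)` of `μ` for the Riesz kernel of exponent `a`. -/
noncomputable def rieszEnergy (a : ℝ) (μ : Measure X) : ℝ≥0∞ :=
  ∫⁻ x, ∫⁻ y, edist x y ^ (-a) ∂μ ∂μ

/-- The Riesz capacity of exponent `a`: the inverse of the least energy of a probability measure
carried by `F`. The Newtonian capacity is a multiple of it. -/
noncomputable def rieszCapacity (a : ℝ) (F : Set X) : ℝ≥0∞ :=
  (⨅ (μ : Measure X) (_ : IsProbabilityMeasure μ) (_ : μ Fᶜ = 0), rieszEnergy a μ)⁻¹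

lemma inv_rieszEnergy_le_rieszCapacity (a : ℝ) {F : Set X} {ν : Measure X}
    [hν : IsProbabilityMeasure ν] (hνF : ν Fᶜ = 0) : (rieszEnergy a ν)⁻¹ ≤ rieszCapacity a F :=
  ENNReal.inv_le_inv.2 (iInf_le_of_le ν (iInf₂_le hν hνF))

lemma rieszEnergy_le_of_closedBall_le_rpow [BorelSpace X] {ν : Measure X} [IsProbabilityMeasure ν]
    {F : Set X} (hνF : ν Fᶜ = 0) {a s R : ℝ} (ha : 0 < a) (has : a < s) (hR : 0 < R)
    (hν : ∀ x ∈ F, ∀ r, 0 < r → ν (closedBall x r) ≤ ENNReal.ofReal ((r / R) ^ s)) :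
    rieszEnergy a ν ≤ ENNReal.ofReal (s / (s - a) * R ^ (-a)) := by
  calc rieszEnergy a ν ≤ ∫⁻ _, ENNReal.ofReal (s / (s - a) * R ^ (-a)) ∂ν := by
        refine lintegral_mono_ae ?_
        filter_upwards [mem_ae_iff.2 hνF] with x hx
        exact lintegral_edist_rpow_neg_le_of_closedBall_le_rpow ha has hR (hν x hx)
    _ = ENNReal.ofReal (s / (s - a) * R ^ (-a)) := by simp

theorem mul_hContent_rpow_le_rieszCapacity [BorelSpace X] {a s : ℝ} (ha : 0 < a) (has : a < s)
    {F : Set X} (hF : IsCompact F) :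
    ENNReal.ofReal ((s - a) / (s * 20 ^ a)) * hContent s F ^ (a / s) ≤ rieszCapacity a F := by
  have hs : 0 < s := ha.trans has
  have hsa : 0 < s - a := sub_pos.2 has
  rcases eq_or_ne (hContent s F) 0 with h₀ | h₀
  · simp [h₀, ENNReal.zero_rpow_of_pos (div_pos ha hs)]
  obtain ⟨ν, _, hνF, hν⟩ := exists_frostman_probabilityMeasure hs hF h₀
  obtain ⟨R, hR, hR_eq⟩ : ∃ R : ℝ, 0 < R ∧ hContent s F = ENNReal.ofReal ((20 * R) ^ s) := by
    have h_top := hContent_ne_top_of_isBounded hs hF.isBounded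
    have h_pos := ENNReal.toReal_pos h₀ h_top
    refine ⟨(hContent s F).toReal ^ s⁻¹ / 20, by positivity, ?_⟩
    rw [mul_div_cancel₀ _ (by norm_num), Real.rpow_inv_rpow h_pos.le hs.ne',
      ENNReal.ofReal_toReal h_top]
  have hν_ball (x : X) (hx : x ∈ F) (r : ℝ) (hr : 0 < r) :
      ν (closedBall x r) ≤ ENNReal.ofReal ((r / R) ^ s) := by
    rw [← mul_div_mul_left r R (c := 20) (by norm_num), Real.div_rpow (by positivity)
      (by positivity), ENNReal.ofReal_div_of_pos (by positivity), ← hR_eq]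
    rw [ENNReal.le_div_iff_mul_le (.inl h₀) (.inr ENNReal.ofReal_ne_top), mul_comm]
    exact hν x hx r hr
  calc ENNReal.ofReal ((s - a) / (s * 20 ^ a)) * hContent s F ^ (a / s)
      = (ENNReal.ofReal (s / (s - a) * R ^ (-a)))⁻¹ := by
        rw [hR_eq, ENNReal.ofReal_rpow_of_pos (by positivity), ← ENNReal.ofReal_mul (by positivity),
          ← ENNReal.ofReal_inv_of_pos (by positivity), ← Real.rpow_mul (by positivity),
          mul_div_cancel₀ _ hs.ne', Real.mul_rpow (by norm_num) hR.le, Real.rpow_neg hR.le]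
        congr 1
        field_simp
    _ ≤ (rieszEnergy a ν)⁻¹ :=
        ENNReal.inv_le_inv.2 (rieszEnergy_le_of_closedBall_le_rpow hνF ha has hR hν_ball)
    _ ≤ rieszCapacity a F := inv_rieszEnergy_le_rieszCapacity a hνF

end RieszCapacity

section HausdorffMeasureSphere

lemma hausdorffMeasure_image_lt_top_of_contDiff {E G : Type*} [NormedAddCommGroup E]
    [NormedSpace ℝ E] [FiniteDimensional ℝ E] [MeasurableSpace E] [BorelSpace E]
    [NormedAddCommGroup G] [NormedSpace ℝ G] [MeasurableSpace G] [BorelSpace G] {f : E → G}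
    (hf : ContDiff ℝ 1 f) {K : Set E} (hK : IsCompact K) :
    μH[finrank ℝ E] (f '' K) < ⊤ := by
  obtain ⟨C, hC⟩ := hf.locallyLipschitz.locallyLipschitzOn.exists_lipschitzOnWith_of_compact hK
  refine (hC.hausdorffMeasure_image_le (Nat.cast_nonneg _)).trans_lt ?_
  exact ENNReal.mul_lt_top (ENNReal.rpow_lt_top_of_nonneg (Nat.cast_nonneg _) ENNReal.coe_ne_top)
    hK.measure_lt_top

variable {E : Type*} [NormedAddCommGroup E] [InnerProductSpace ℝ E] {v : E} {k : ℕ}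

lemma finrank_orthogonal_span_singleton_of_norm_eq_one (h : finrank ℝ E = k + 1) (hv : ‖v‖ = 1) :
    finrank ℝ (ℝ ∙ v)ᗮ = k :=
  have : Fact (finrank ℝ E = k + 1) := ⟨h⟩
  Submodule.finrank_orthogonal_span_singleton (norm_ne_zero_iff.1 (hv ▸ one_ne_zero))

lemma norm_stereoToFun_le_two {x : E} (hx : ‖x‖ = 1) (hvx : ⟪v, x⟫ ≤ 0) :
    ‖stereoToFun v x‖ ≤ 2 := by
  have h_proj : ‖(ℝ ∙ v)ᗮ.orthogonalProjectionOnto x‖ ≤ 1 :=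
    ((ℝ ∙ v)ᗮ.norm_orthogonalProjectionOnto_apply_le x).trans_eq hx
  rw [stereoToFun_apply, norm_smul, innerSL_apply_apply, Real.norm_of_nonneg (by bound)]
  have h_scale : 2 / (1 - ⟪v, x⟫) ≤ 2 := div_le_self zero_le_two (by linarith)
  nlinarith [norm_nonneg ((ℝ ∙ v)ᗮ.orthogonalProjectionOnto x)]

lemma sphere_inter_inner_nonpos_subset_image (hv : ‖v‖ = 1) :
    sphere (0 : E) 1 ∩ {x | ⟪v, x⟫ ≤ 0} ⊆
      (fun w : (ℝ ∙ v)ᗮ => stereoInvFunAux v w) '' closedBall 0 2 := by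
  rintro x ⟨hx, hvx⟩
  have hxv : x ≠ v := by
    rintro rfl
    rw [mem_ofPred_eq, real_inner_self_eq_norm_sq, hv] at hvx
    norm_num at hvx
  exact ⟨stereoToFun v x, mem_closedBall_zero_iff.2
    (norm_stereoToFun_le_two (mem_sphere_zero_iff_norm.1 hx) hvx),
    congrArg Subtype.val (stereo_left_inv hv (x := ⟨x, hx⟩) hxv)⟩

lemma closedBall_subset_orthogonalProjectionOnto_image_sphere (hv : ‖v‖ = 1) :
    closedBall 0 1 ⊆ (ℝ ∙ v)ᗮ.orthogonalProjectionOnto '' sphere (0 : E) 1 := by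
  intro w hw
  have hwv : ⟪(w : E), v⟫ = 0 := by
    rw [real_inner_comm]; exact Submodule.mem_orthogonal_singleton_iff_inner_right.1 w.2
  refine ⟨w + √(1 - ‖w‖ ^ 2) • v, mem_sphere_zero_iff_norm.2 ?_, ?_⟩
  · have hw' : 0 ≤ 1 - ‖w‖ ^ 2 := by
      have := mem_closedBall_zero_iff.1 hw
      nlinarith [norm_nonneg w]
    have : ‖(w : E) + √(1 - ‖w‖ ^ 2) • v‖ ^ 2 = 1 := by
      rw [norm_add_sq_real, inner_smul_right, hwv, norm_smul, hv, mul_one, Real.norm_eq_abs, sq_abs,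
        Real.sq_sqrt hw', Submodule.coe_norm]
      ring
    exact (pow_eq_one_iff_of_nonneg (norm_nonneg _) two_ne_zero).1 this
  · rw [map_add, map_smul, Submodule.orthogonalProjectionOnto_mem_subspace_eq_self,
      Submodule.orthogonalProjectionOnto_orthogonalComplement_singleton_eq_zero, smul_zero,
      add_zero]

variable [MeasurableSpace E] [BorelSpace E]

lemma hausdorffMeasure_sphere_lt_top (h : finrank ℝ E = k + 1) :
    μH[k] (sphere (0 : E) 1) < ⊤ := by
  have : FiniteDimensional ℝ E := .of_finrank_pos (by lia)
  have : Nontrivial E := nontrivial_of_finrank_pos (R := ℝ) (by lia)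
  obtain ⟨v, hv⟩ := exists_norm_eq E zero_le_one
  have h_half {u : E} (hu : ‖u‖ = 1) : μH[k] (sphere (0 : E) 1 ∩ {x | ⟪u, x⟫ ≤ 0}) < ⊤ := by
    refine (measure_mono (sphere_inter_inner_nonpos_subset_image hu)).trans_lt ?_
    have hdim := finrank_orthogonal_span_singleton_of_norm_eq_one h hu
    exact hdim ▸ hausdorffMeasure_image_lt_top_of_contDiff
      (contDiff_stereoInvFunAux.comp (ℝ ∙ u)ᗮ.subtypeL.contDiff) (isCompact_closedBall 0 2)
  refine (measure_mono (t := sphere (0 : E) 1 ∩ {x | ⟪v, x⟫ ≤ 0} ∪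
    sphere (0 : E) 1 ∩ {x | ⟪-v, x⟫ ≤ 0}) fun x hx => ?_).trans_lt
    (measure_union_lt_top (h_half hv) (h_half ((norm_neg v).trans hv)))
  rw [← inter_union_distrib_left]
  exact ⟨hx, (le_total ⟪v, x⟫ 0).imp_right fun h => by simpa using h⟩

lemma hausdorffMeasure_sphere_pos (h : finrank ℝ E = k + 1) : 0 < μH[k] (sphere (0 : E) 1) := by
  have : FiniteDimensional ℝ E := .of_finrank_pos (by lia)
  have : Nontrivial E := nontrivial_of_finrank_pos (R := ℝ) (by lia)
  obtain ⟨v, hv⟩ := exists_norm_eq E zero_le_one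
  have hdim := finrank_orthogonal_span_singleton_of_norm_eq_one h hv
  have h_ball : 0 < μH[k] (closedBall (0 : (ℝ ∙ v)ᗮ) 1) :=
    hdim ▸ measure_closedBall_pos μH[finrank ℝ (ℝ ∙ v)ᗮ] 0 one_pos
  calc 0 < μH[k] (closedBall (0 : (ℝ ∙ v)ᗮ) 1) := h_ball
    _ ≤ μH[k] ((ℝ ∙ v)ᗮ.orthogonalProjectionOnto '' sphere (0 : E) 1) :=
      measure_mono (closedBall_subset_orthogonalProjectionOnto_image_sphere hv)
    _ ≤ μH[k] (sphere (0 : E) 1) := hausdorffMeasure_orthogonalProjectionOnto_le _ _ _ (by simp)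

end HausdorffMeasureSphere

section NewtonianCapacity

lemma newtKernelConst_eq_natCast_mul {n : ℕ} (hn : 3 ≤ n) :
    newtKernelConst n =
      ((n - 2 : ℕ) : ℝ≥0∞) * μH[(n - 1 : ℕ)] (sphere (0 : EuclideanSpace ℝ (Fin n)) 1) := by
  rw [newtKernelConst, Nat.cast_sub (by lia : 1 ≤ n)]
  push_cast
  rfl

lemma newtKernelConst_pos {n : ℕ} (hn : 3 ≤ n) : 0 < newtKernelConst n := by
  rw [newtKernelConst_eq_natCast_mul hn]
  refine ENNReal.mul_pos ?_ (hausdorffMeasure_sphere_pos ?_).ne'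
  · exact_mod_cast (by lia : n - 2 ≠ 0)
  · rw [finrank_euclideanSpace_fin]; lia

lemma newtKernelConst_ne_top {n : ℕ} (hn : 3 ≤ n) : newtKernelConst n ≠ ⊤ := by
  rw [newtKernelConst_eq_natCast_mul hn]
  refine ENNReal.mul_ne_top (ENNReal.natCast_ne_top _) (hausdorffMeasure_sphere_lt_top ?_).ne
  rw [finrank_euclideanSpace_fin]; lia

lemma newtEnergy_eq_newtKernelConst_mul_rieszEnergy {n : ℕ} (hn : 3 ≤ n) {m : ℕ}
    (μ : Measure (EuclideanSpace ℝ (Fin m))) :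
    newtEnergy n μ = newtKernelConst n * rieszEnergy ((n : ℝ) - 2) μ := by
  have h_top := newtKernelConst_ne_top hn
  simp only [newtEnergy, rieszEnergy, lintegral_const_mul' _ _ h_top]

lemma newtCap_eq_inv_newtKernelConst_mul_rieszCapacity {n : ℕ} (hn : 3 ≤ n) {m : ℕ}
    (F : Set (EuclideanSpace ℝ (Fin m))) :
    newtCap n F = (newtKernelConst n)⁻¹ * rieszCapacity ((n : ℝ) - 2) F := by
  have h_pos := (newtKernelConst_pos hn).ne'
  have h_top := newtKernelConst_ne_top hn
  simp only [newtCap, rieszCapacity, newtEnergy_eq_newtKernelConst_mul_rieszEnergy hn,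
    ← ENNReal.mul_iInf_of_ne h_pos h_top]
  rw [ENNReal.mul_inv (.inl h_pos) (.inl h_top)]

end NewtonianCapacity

theorem stmt_2_general {n : ℕ} (hn : 3 ≤ n) {s : ℝ} (hs : (n : ℝ) - 2 < s) :
    ∃ c : ℝ≥0∞, 0 < c ∧ c ≠ ⊤ ∧
      ∀ (m : ℕ) (F : Set (EuclideanSpace ℝ (Fin m))), IsCompact F →
        c * hContent s F ^ (((n : ℝ) - 2) / s) ≤ newtCap n F := by
  have hn' : (0 : ℝ) < n - 2 := by
    have : (3 : ℝ) ≤ n := by exact_mod_cast hn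
    linarith
  have hκ := newtKernelConst_pos hn
  have hκ_top := newtKernelConst_ne_top hn
  refine ⟨(newtKernelConst n)⁻¹ * ENNReal.ofReal ((s - (n - 2)) / (s * 20 ^ ((n : ℝ) - 2))),
    ENNReal.mul_pos (ENNReal.inv_ne_zero.2 hκ_top) ?_,
    ENNReal.mul_ne_top (ENNReal.inv_ne_top.2 hκ.ne') ENNReal.ofReal_ne_top, fun m F hF => ?_⟩
  · have := hn'.trans hs
    have := sub_pos.2 hs
    exact (ENNReal.ofReal_pos.2 (by positivity)).ne'
  · rw [newtCap_eq_inv_newtKernelConst_mul_rieszCapacity hn, mul_assoc]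
    gcongr
    exact mul_hContent_rpow_le_rieszCapacity hn' hs hF

/-- for `n ≥ 3`, compact `F ⊂ ℝⁿ` and `n-2 < s ≤ n`,
`Cap_{n-2}(F) ≥ c(s,n) · (ℋ^s_∞(F))^{(n-2)/s}`. -/
theorem stmt_2 (n : ℕ) (hn : 3 ≤ n) (s : ℝ) (hs1 : (n : ℝ) - 2 < s) (hs2 : s ≤ n) :
    ∃ c : ℝ≥0∞, 0 < c ∧ c ≠ ⊤ ∧
      ∀ F : Set (EuclideanSpace ℝ (Fin n)), IsCompact F →
        c * hContent s F ^ (((n : ℝ) - 2) / s) ≤ newtCap n F := by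
  obtain ⟨c, hc, hc_top, h⟩ := stmt_2_general hn hs1
  exact ⟨c, hc, hc_top, h n⟩
end

section
/- Let E ⊂ ℝ² be compact and 0 < s ≤ 2. Then Cap_L(E) ≥ c(s) · (ℋ^s_∞(E))^{1/s}, where Cap_L is the logarithmic capacity. -/
/-!
If a finite measure `μ` gave every point of `E` a ball heavier than `μ(X) (10 r) ^ s / ℋ^s_∞(E)`,
Vitali's covering lemma would produce a cover of `E` cheaper than its content. Hence every
probability measure on `E` has a point `x ∈ E` with `μ(B(x, r)) ≤ (r / ρ) ^ s` for all `r`, where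
`ρ = ℋ^s_∞(E) ^ (1 / s) / 10`, and by the layer cake formula its logarithmic potential at `x` is at
most `1 / s - log ρ`.

No Frostman measure is needed to pass from potentials to energies. Truncate the kernel so that it
becomes continuous; by compactness some probability measure on `E` minimizes the truncated energy,
and moving mass from it towards a point mass at `x` shows that its energy is at most its potential
at `x`, for every `x`. So the minimal truncated energy is at most `1 / s - log ρ`, and Cantor's
intersection theorem gives one measure for which this holds at all truncation levels. Monotone
convergence bounds the full energy, and the capacity is at least `exp (-1 / s) ρ`.
-/

open MeasureTheory Metric
open scoped ENNReal Classical

/-- The logarithmic energy `∬ log(1/|x-y|) dμ(x) dμ(y)`, as an extended real number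
(positive part minus negative part; the kernel is `+∞` on the diagonal). -/
noncomputable def logEnergy (μ : Measure (EuclideanSpace ℝ (Fin 2))) : EReal :=
  ((∫⁻ p : EuclideanSpace ℝ (Fin 2) × EuclideanSpace ℝ (Fin 2),
      (if p.1 = p.2 then ⊤ else ENNReal.ofReal (Real.log (1 / dist p.1 p.2)))
      ∂(μ.prod μ) : ℝ≥0∞) : EReal)
  - ((∫⁻ p : EuclideanSpace ℝ (Fin 2) × EuclideanSpace ℝ (Fin 2),
      ENNReal.ofReal (Real.log (dist p.1 p.2)) ∂(μ.prod μ) : ℝ≥0∞) : EReal)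

/-- The Robin constant `V(F) = inf ∬ log(1/|x-y|) dμ dμ`, the infimum over probability
measures supported on `F`.  Note `V(F) = 2π / Cap₀(F)` where `Cap₀` is the Wiener capacity
`Cap₀(F) = (inf_μ ∬ (1/2π) log(1/|x−y|) dμ dμ)⁻¹`. -/
noncomputable def wienerV (F : Set (EuclideanSpace ℝ (Fin 2))) : EReal :=
  ⨅ (μ : Measure (EuclideanSpace ℝ (Fin 2))) (_ : IsProbabilityMeasure μ) (_ : μ Fᶜ = 0),
    logEnergy μ

/-- The logarithmic capacity `Cap_L(F) = exp(−2π/Cap₀(F)) = exp(−V(F))`. -/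
noncomputable def logCap (F : Set (EuclideanSpace ℝ (Fin 2))) : ℝ :=
  if wienerV F = ⊤ then 0 else Real.exp (-(wienerV F).toReal)

open Filter Set Topology

lemma integrable_of_compactSpace {X : Type*} [MeasurableSpace X]
    [TopologicalSpace X] [CompactSpace X] [OpensMeasurableSpace X]
    {μ : Measure X} [IsFiniteMeasure μ] {f : X → ℝ} (hf : Continuous f) : Integrable f μ :=
  hf.integrable_of_hasCompactSupport (HasCompactSupport.of_compactSpace f)

lemma lintegral_le_of_forall_lintegral_min_natCast_le {Ω : Type*} [MeasurableSpace Ω]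
    {μ : Measure Ω} {f : Ω → ℝ≥0∞} (hf : Measurable f) {a : ℝ≥0∞}
    (h : ∀ n : ℕ, ∫⁻ ω, min (f ω) n ∂μ ≤ a) : ∫⁻ ω, f ω ∂μ ≤ a := by
  have hsup (ω : Ω) : ⨆ n : ℕ, min (f ω) n = f ω := by
    rw [← inf_iSup_eq, ENNReal.iSup_natCast, inf_top_eq]
  calc ∫⁻ ω, f ω ∂μ = ∫⁻ ω, ⨆ n : ℕ, min (f ω) n ∂μ := by simp only [hsup]
    _ = ⨆ n : ℕ, ∫⁻ ω, min (f ω) n ∂μ :=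
        lintegral_iSup (fun n => hf.min measurable_const)
          fun m n hmn ω => min_le_min_left _ (by exact_mod_cast hmn)
    _ ≤ a := iSup_le h

lemma le_of_forall_le_quadratic {a b c : ℝ}
    (h : ∀ t ∈ Ioc (0 : ℝ) 1, a ≤ (1 - t) ^ 2 * a + 2 * t * (1 - t) * b + t ^ 2 * c) : a ≤ b := by
  have hdiv : ∀ t ∈ Ioc (0 : ℝ) 1, (2 - t) * a ≤ 2 * (1 - t) * b + t * c := fun t ht =>
    le_of_mul_le_mul_left (by linarith [h t ht]) ht.1
  have hlim : Tendsto (fun t : ℝ => 2 * (1 - t) * b + t * c - (2 - t) * a) (𝓝[>] 0)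
      (𝓝 (2 * (1 - 0) * b + 0 * c - (2 - 0) * a)) :=
    (Continuous.tendsto (by fun_prop) 0).mono_left nhdsWithin_le_nhds
  have := ge_of_tendsto hlim (eventually_of_mem (Ioc_mem_nhdsGT one_pos)
    fun t ht => sub_nonneg.2 (hdiv t ht))
  linarith

section HausdorffContent

variable {X : Type*}

lemma hContent_le_tsum [EMetricSpace X] {ι : Type*} [Countable ι] {s : ℝ} (hs : 0 < s)
    {E : Set X} {A : ι → Set X} (hA : E ⊆ ⋃ i, A i) :
    hContent s E ≤ ∑' i, ediam (A i) ^ s := by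
  have := Encodable.ofCountable ι
  rw [← Encodable.iUnion_decode₂] at hA
  calc hContent s E ≤ ∑' n, ediam (⋃ i ∈ Encodable.decode₂ ι n, A i) ^ s :=
        iInf₂_le (fun n => ⋃ i ∈ Encodable.decode₂ ι n, A i) hA
    _ = ∑' i, ediam (A i) ^ s :=
        tsum_iUnion_decode₂ (fun t : Set X => ediam t ^ s) (by simp [hs]) A

lemma nonempty_of_hContent_ne_zero [EMetricSpace X] {s : ℝ} (hs : 0 < s) {E : Set X}
    (hE : hContent s E ≠ 0) : E.Nonempty := by
  contrapose! hE
  simpa [hE] using hContent_le_tsum hs (E := E) (A := fun i : Empty => i.elim) (by simp [hE])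

lemma ediam_closedBall_le_ofReal [PseudoMetricSpace X] (x : X) (r : ℝ) :
    ediam (closedBall x r) ≤ ENNReal.ofReal (2 * r) :=
  ediam_le fun y hy z hz => by
    rw [edist_dist]
    refine ENNReal.ofReal_le_ofReal ?_
    linarith [dist_triangle_right y z x, mem_closedBall.1 hy, mem_closedBall.1 hz]

variable [MetricSpace X] [MeasurableSpace X] {s : ℝ} {E : Set X}

lemma ofReal_rpow_lt_hContent (μ : Measure X) {x : X} {r : ℝ}
    (h : μ univ * ENNReal.ofReal (10 * r) ^ s < hContent s E * μ (closedBall x r)) :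
    ENNReal.ofReal (10 * r) ^ s < hContent s E := by
  refine lt_of_mul_lt_mul_left' (a := μ univ) (h.trans_le ?_)
  rw [mul_comm]
  gcongr
  exact subset_univ _

variable [OpensMeasurableSpace X]

lemma exists_countable_pairwiseDisjoint_closedBall_hContent_le (hs : 0 < s) (μ : Measure X)
    [SFinite μ] {r : X → ℝ} {R : ℝ} (hr_pos : ∀ x ∈ E, 0 < r x) (hr_le : ∀ x ∈ E, r x ≤ R)
    (hμ : ∀ x ∈ E, μ (closedBall x (r x)) ≠ 0) :
    ∃ u ⊆ E, u.Countable ∧ u.PairwiseDisjoint (fun x => closedBall x (r x)) ∧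
      hContent s E ≤ ∑' x : u, ENNReal.ofReal (10 * r x) ^ s := by
  obtain ⟨u, huE, hdisj, hcover⟩ :=
    Vitali.exists_disjoint_subfamily_covering_enlargement_closedBall E id r R hr_le 5 (by norm_num)
  have hu : Countable u := by
    have hpos := Measure.countable_meas_pos_of_disjoint_iUnion (μ := μ)
      (fun x : u => measurableSet_closedBall (x := (x : X)) (ε := r x))
      (hdisj.on_injective Subtype.val_injective Subtype.prop)
    simpa [pos_iff_ne_zero, fun x : u => hμ x (huE x.2), countable_univ_iff] using hpos
  have hsub : E ⊆ ⋃ x : u, closedBall (x : X) (5 * r x) := fun y hy => by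
    obtain ⟨x, hxu, hyx⟩ := hcover y hy
    exact mem_iUnion.2 ⟨⟨x, hxu⟩, hyx (mem_closedBall_self (hr_pos y hy).le)⟩
  refine ⟨u, huE, hu, hdisj, (hContent_le_tsum hs hsub).trans (ENNReal.tsum_le_tsum fun x => ?_)⟩
  gcongr
  exact (ediam_closedBall_le_ofReal _ _).trans_eq (by ring_nf)

lemma exists_forall_hContent_mul_measure_closedBall_le (hs : 0 < s) (hE₀ : hContent s E ≠ 0)
    (hE : hContent s E ≠ ⊤) (μ : Measure X) [IsFiniteMeasure μ] :
    ∃ x ∈ E, ∀ r > 0,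
      hContent s E * μ (closedBall x r) ≤ μ univ * ENNReal.ofReal (10 * r) ^ s := by
  by_contra! hheavy
  choose! r hr_pos hr_heavy using hheavy
  have hr_le : ∀ x ∈ E, r x ≤ (hContent s E ^ s⁻¹).toReal := fun x hx => by
    have hroot : 10 * r x ≤ (hContent s E ^ s⁻¹).toReal :=
      (ENNReal.ofReal_le_iff_le_toReal (ENNReal.rpow_ne_top_of_nonneg (inv_nonneg.2 hs.le) hE)).1
        ((ENNReal.le_rpow_inv_iff hs).2 (ofReal_rpow_lt_hContent μ (hr_heavy x hx)).le)
    linarith [hr_pos x hx]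
  obtain ⟨u, huE, hu, hdisj, hcontent⟩ :=
    exists_countable_pairwiseDisjoint_closedBall_hContent_le hs μ hr_pos hr_le
      fun x hx => right_ne_zero_of_mul (hr_heavy x hx).ne_bot
  obtain ⟨x₀⟩ : Nonempty u := by
    by_contra hempty
    rw [not_nonempty_iff] at hempty
    simp [hE₀] at hcontent
  have hmass : ∑' x : u, μ (closedBall (x : X) (r x)) ≤ μ univ :=
    (measure_biUnion hu hdisj fun _ _ => measurableSet_closedBall).symm.trans_le
      (measure_mono (subset_univ _))
  have hheavy_le (x : u) := (hr_heavy x (huE x.2)).le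
  have hfinite : ∑' x : u, μ univ * ENNReal.ofReal (10 * r x) ^ s ≠ ⊤ := by
    refine ne_top_of_le_ne_top (ENNReal.mul_ne_top hE (measure_ne_top μ univ)) ?_
    grw [← hmass, ← ENNReal.tsum_mul_left]
    exact ENNReal.tsum_le_tsum hheavy_le
  refine lt_irrefl (hContent s E * μ univ) ?_
  calc hContent s E * μ univ
      ≤ ∑' x : u, μ univ * ENNReal.ofReal (10 * r x) ^ s := by
        rw [mul_comm, ENNReal.tsum_mul_left]
        gcongr
    _ < ∑' x : u, hContent s E * μ (closedBall (x : X) (r x)) :=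
        ENNReal.tsum_lt_tsum hfinite hheavy_le (hr_heavy x₀ (huE x₀.2))
    _ ≤ hContent s E * μ univ := by
        rw [ENNReal.tsum_mul_left]
        gcongr

end HausdorffContent

section TruncatedKernel

/-- The logarithmic kernel `log (1 / d)`, as a function of the distance `d`, cut off at height `M`;
unlike `log (1 / d)` it is continuous at `d = 0`. -/
noncomputable def truncLog (M d : ℝ) : ℝ := -Real.log (max d (Real.exp (-M)))

lemma max_exp_pos (M d : ℝ) : 0 < max d (Real.exp (-M)) :=
  lt_max_of_lt_right (Real.exp_pos _)

@[fun_prop]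
lemma continuous_truncLog (M : ℝ) : Continuous (truncLog M) :=
  ((by fun_prop : Continuous fun d => max d (Real.exp (-M))).log
    fun d => (max_exp_pos M d).ne').neg

lemma truncLog_mono_left {M N : ℝ} (h : M ≤ N) (d : ℝ) : truncLog M d ≤ truncLog N d := by
  unfold truncLog
  gcongr

lemma truncLog_zero (M : ℝ) : truncLog M 0 = M := by
  simp [truncLog, (Real.exp_pos _).le]

lemma truncLog_eq_min {d : ℝ} (hd : 0 < d) (M : ℝ) : truncLog M d = min (Real.log (1 / d)) M := by
  have hmax : Real.log (max d (Real.exp (-M))) = max (Real.log d) (-M) := by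
    rw [← Real.log_exp (-M), Real.strictMonoOn_log.monotoneOn.map_max hd (Real.exp_pos _),
      Real.log_exp]
  rw [truncLog, hmax, one_div, Real.log_inv, ← min_neg_neg, neg_neg]

lemma ofReal_neg_truncLog {M d : ℝ} (hM : 0 ≤ M) (hd : 0 ≤ d) :
    ENNReal.ofReal (-truncLog M d) = ENNReal.ofReal (Real.log d) := by
  rcases hd.eq_or_lt with rfl | hd
  · simp [truncLog_zero, hM]
  · rw [truncLog_eq_min hd, one_div, Real.log_inv, ← max_neg_neg, neg_neg, ENNReal.ofReal_max,
      ENNReal.ofReal_of_nonpos (neg_nonpos.2 hM), max_eq_left zero_le]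

lemma le_mul_exp_of_le_truncLog_add_log {M d ρ t : ℝ} (hρ : 0 < ρ)
    (h : t ≤ truncLog M d + Real.log ρ) : d ≤ ρ * Real.exp (-t) := by
  refine (le_max_left d (Real.exp (-M))).trans ?_
  rw [← Real.log_le_log_iff (max_exp_pos M d) (by positivity),
    Real.log_mul hρ.ne' (Real.exp_ne_zero _), Real.log_exp]
  unfold truncLog at h
  linarith

lemma integral_truncLog_le {Ω : Type*} [MeasurableSpace Ω] {μ : Measure Ω} [IsProbabilityMeasure μ]
    {d : Ω → ℝ} {M s ρ : ℝ} (hs : 0 < s) (hρ : 0 < ρ)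
    (hd : Integrable (fun ω => truncLog M (d ω)) μ)
    (h : ∀ r > 0, μ.real {ω | d ω ≤ r} ≤ (r / ρ) ^ s) :
    ∫ ω, truncLog M (d ω) ∂μ ≤ 1 / s - Real.log ρ := by
  set f : Ω → ℝ := fun ω => max (truncLog M (d ω) + Real.log ρ) 0
  have hf : Integrable f μ := (hd.add (integrable_const _)).pos_part
  have htail : ∀ t > 0, μ.real {ω | t ≤ f ω} ≤ Real.exp (-s * t) := fun t ht => by
    calc μ.real {ω | t ≤ f ω} ≤ μ.real {ω | d ω ≤ ρ * Real.exp (-t)} :=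
          measureReal_mono fun ω hω => le_mul_exp_of_le_truncLog_add_log hρ
            ((le_max_iff.1 hω).resolve_right ht.not_ge)
      _ ≤ (ρ * Real.exp (-t) / ρ) ^ s := h _ (by positivity)
      _ = Real.exp (-s * t) := by
          rw [mul_div_cancel_left₀ _ hρ.ne', ← Real.exp_mul]
          ring_nf
  have hf_le : ∫ ω, f ω ∂μ ≤ 1 / s := by
    calc ∫ ω, f ω ∂μ = ∫ t in Ioi 0, μ.real {ω | t ≤ f ω} :=
          hf.integral_eq_integral_meas_le (.of_forall fun _ => le_max_right _ _)
      _ ≤ ∫ t in Ioi 0, Real.exp (-s * t) :=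
          integral_mono_of_nonneg (.of_forall fun _ => measureReal_nonneg)
            (exp_neg_integrableOn_Ioi 0 hs) (ae_restrict_of_forall_mem measurableSet_Ioi htail)
      _ = 1 / s := by
          rw [integral_exp_mul_Ioi (neg_lt_zero.2 hs), mul_zero, Real.exp_zero, neg_div_neg_eq]
  have hmono : ∫ ω, (truncLog M (d ω) + Real.log ρ) ∂μ ≤ ∫ ω, f ω ∂μ :=
    integral_mono (hd.add (integrable_const _)) hf fun _ => le_max_left _ _
  rw [integral_add hd (integrable_const _), integral_const, probReal_univ, one_smul] at hmono
  linarith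

end TruncatedKernel

section EnergyMinimizer

variable {X : Type*} [MeasurableSpace X]

/-- The point `(1 - t) μ + t δ_x` of the segment from `μ` to the Dirac mass at `x`, meant for
`t ∈ [0, 1]`: the variation of `μ` that compares its energy with its potential at `x`. -/
noncomputable def diracMix (μ : Measure X) (x : X) (t : ℝ) : Measure X :=
  ENNReal.ofReal (1 - t) • μ + ENNReal.ofReal t • Measure.dirac x

lemma isProbabilityMeasure_diracMix (μ : Measure X) [IsProbabilityMeasure μ] (x : X) {t : ℝ}
    (ht : t ∈ Icc (0 : ℝ) 1) : IsProbabilityMeasure (diracMix μ x t) :=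
  ⟨by simp [diracMix, ← ENNReal.ofReal_add (sub_nonneg.2 ht.2) ht.1]⟩

lemma integral_diracMix [MeasurableSingletonClass X] {μ : Measure X} (x : X) {t : ℝ}
    (ht : t ∈ Icc (0 : ℝ) 1) {f : X → ℝ} (hf : Integrable f μ) :
    ∫ y, f y ∂(diracMix μ x t) = (1 - t) * ∫ y, f y ∂μ + t * f x := by
  have hdirac : Integrable f (Measure.dirac x) := integrable_dirac enorm_lt_top
  rw [diracMix, integral_add_measure (hf.smul_measure ENNReal.ofReal_ne_top)
    (hdirac.smul_measure ENNReal.ofReal_ne_top), integral_smul_measure, integral_smul_measure,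
    integral_dirac, ENNReal.toReal_ofReal (sub_nonneg.2 ht.2), ENNReal.toReal_ofReal ht.1,
    smul_eq_mul, smul_eq_mul]

variable [TopologicalSpace X] [T2Space X] [CompactSpace X] [SecondCountableTopology X]
  [BorelSpace X] (k : C(X × X, ℝ))

lemma integral_prod_diracMix (hk : ∀ x y, k (x, y) = k (y, x)) (μ : Measure X)
    [IsProbabilityMeasure μ] (x : X) {t : ℝ} (ht : t ∈ Icc (0 : ℝ) 1) :
    ∫ p, k p ∂((diracMix μ x t).prod (diracMix μ x t)) =
      (1 - t) ^ 2 * ∫ p, k p ∂(μ.prod μ) + 2 * t * (1 - t) * ∫ y, k (x, y) ∂μ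
        + t ^ 2 * k (x, x) := by
  have := isProbabilityMeasure_diracMix μ x ht
  set ν := diracMix μ x t
  set U : X → ℝ := fun y => ∫ z, k (y, z) ∂μ
  have hk_int : Integrable k (μ.prod μ) := integrable_of_compactSpace k.continuous
  have hU_int : Integrable U μ := hk_int.integral_prod_left
  have hslice_int : Integrable (fun y => k (y, x)) μ := integrable_of_compactSpace (by fun_prop)
  have hinner (y : X) : ∫ z, k (y, z) ∂ν = (1 - t) * U y + t * k (y, x) :=
    integral_diracMix x ht (integrable_of_compactSpace (by fun_prop))
  have hslice : ∫ y, k (y, x) ∂μ = U x := by simp only [U, hk x]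
  have hadd_int : Integrable (fun y => (1 - t) * U y + t * k (y, x)) μ :=
    (hU_int.const_mul _).add (hslice_int.const_mul _)
  have hpotential : ∫ y, ((1 - t) * U y + t * k (y, x)) ∂μ
      = (1 - t) * ∫ p, k p ∂(μ.prod μ) + t * U x := by
    rw [integral_add (hU_int.const_mul _) (hslice_int.const_mul _), integral_const_mul,
      integral_const_mul, hslice, integral_prod _ hk_int]
  calc ∫ p, k p ∂(ν.prod ν) = ∫ y, ((1 - t) * U y + t * k (y, x)) ∂ν := by
        rw [integral_prod _ (integrable_of_compactSpace k.continuous)]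
        simp only [hinner]
    _ = (1 - t) * ((1 - t) * ∫ p, k p ∂(μ.prod μ) + t * U x)
          + t * ((1 - t) * U x + t * k (x, x)) := by
        rw [integral_diracMix x ht hadd_int, hpotential]
    _ = _ := by ring

lemma integral_prod_self_le_integral_of_forall_le (hk : ∀ x y, k (x, y) = k (y, x))
    (μ : ProbabilityMeasure X)
    (hμ : ∀ ν : ProbabilityMeasure X,
      ∫ p, k p ∂((μ : Measure X).prod μ) ≤ ∫ p, k p ∂((ν : Measure X).prod ν)) (x : X) :
    ∫ p, k p ∂((μ : Measure X).prod μ) ≤ ∫ y, k (x, y) ∂μ :=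
  le_of_forall_le_quadratic fun _ ht => by
    rw [← integral_prod_diracMix k hk μ x (Ioc_subset_Icc_self ht)]
    exact hμ ⟨_, isProbabilityMeasure_diracMix μ x (Ioc_subset_Icc_self ht)⟩

lemma continuous_integral_prod_self :
    Continuous fun μ : ProbabilityMeasure X => ∫ p, k p ∂((μ : Measure X).prod μ) :=
  (ProbabilityMeasure.continuous_integral_boundedContinuousFunction
    (BoundedContinuousFunction.mkOfCompact k)).comp
    (ProbabilityMeasure.continuous_prod.comp (by fun_prop : Continuous fun μ => (μ, μ)))

lemma exists_integral_prod_self_le [Nonempty X] (hk : ∀ x y, k (x, y) = k (y, x)) {A : ℝ}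
    (hA : ∀ μ : ProbabilityMeasure X, ∃ x, ∫ y, k (x, y) ∂μ ≤ A) :
    ∃ μ : ProbabilityMeasure X, ∫ p, k p ∂((μ : Measure X).prod μ) ≤ A := by
  have : Nonempty (ProbabilityMeasure X) := ⟨diracProba (Classical.arbitrary X)⟩
  obtain ⟨μ, -, hμ⟩ := isCompact_univ.exists_isMinOn univ_nonempty
    (continuous_integral_prod_self k).continuousOn
  obtain ⟨x, hx⟩ := hA μ
  exact ⟨μ, (integral_prod_self_le_integral_of_forall_le k hk μ
    (fun ν => hμ (mem_univ ν)) x).trans hx⟩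

end EnergyMinimizer

section LogEnergy

variable {X : Type*} [MetricSpace X]

/-- The positive part of the kernel `log (1 / dist x y)`, equal to `∞` on the diagonal. -/
noncomputable def logKernelPos (p : X × X) : ℝ≥0∞ :=
  if p.1 = p.2 then ⊤ else ENNReal.ofReal (Real.log (1 / dist p.1 p.2))

lemma ofReal_truncLog_dist {M : ℝ} (p : X × X) :
    ENNReal.ofReal (truncLog M (dist p.1 p.2)) = min (logKernelPos p) (ENNReal.ofReal M) := by
  unfold logKernelPos
  split_ifs with hp
  · rw [hp, dist_self, truncLog_zero, min_eq_right le_top]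
  · rw [truncLog_eq_min (dist_pos.2 hp), ENNReal.ofReal_min]

variable [MeasurableSpace X]

/-- The energy `logEnergy` for a measure on an arbitrary metric space. -/
noncomputable def metricLogEnergy (μ : Measure X) : EReal :=
  ((∫⁻ p, logKernelPos p ∂(μ.prod μ) : ℝ≥0∞) : EReal)
    - ((∫⁻ p, ENNReal.ofReal (Real.log (dist p.1 p.2)) ∂(μ.prod μ) : ℝ≥0∞) : EReal)

/-- The Robin constant `wienerV` of a subset of an arbitrary metric space. -/
noncomputable def metricWienerV (F : Set X) : EReal :=
  ⨅ (μ : Measure X) (_ : IsProbabilityMeasure μ) (_ : μ Fᶜ = 0), metricLogEnergy μ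

/-- The logarithmic capacity `logCap` of a subset of an arbitrary metric space. -/
noncomputable def metricLogCap (F : Set X) : ℝ :=
  if metricWienerV F = ⊤ then 0 else Real.exp (-(metricWienerV F).toReal)

lemma measurable_logKernelPos [SecondCountableTopology X] [OpensMeasurableSpace X] :
    Measurable (logKernelPos (X := X)) :=
  Measurable.ite (measurableSet_eq_fun measurable_fst measurable_snd) measurable_const
    (by fun_prop)

lemma metricLogEnergy_map {Y : Type*} [MetricSpace Y] [MeasurableSpace Y] {f : X → Y}
    (hf : Isometry f) (hfm : MeasurableEmbedding f) (μ : Measure X) [SFinite μ] :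
    metricLogEnergy (μ.map f) = metricLogEnergy μ := by
  simp only [metricLogEnergy, Measure.map_prod_map _ _ hfm.measurable hfm.measurable,
    (hfm.prodMap hfm).lintegral_map, logKernelPos, Prod.map_fst, Prod.map_snd, hf.dist_eq,
    hf.injective.eq_iff]

section CompactSpace

variable [CompactSpace X] [BorelSpace X]

lemma integrable_truncLog_dist (M : ℝ) (μ : Measure (X × X)) [IsFiniteMeasure μ] :
    Integrable (fun p => truncLog M (dist p.1 p.2)) μ :=
  integrable_of_compactSpace (by fun_prop)

lemma lintegral_ofReal_log_dist_ne_top (μ : Measure (X × X)) [IsFiniteMeasure μ] :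
    ∫⁻ p, ENNReal.ofReal (Real.log (dist p.1 p.2)) ∂μ ≠ ⊤ := by
  simp only [← ofReal_neg_truncLog le_rfl dist_nonneg]
  exact (integrable_truncLog_dist 0 μ).neg.lintegral_lt_top.ne

lemma integral_truncLog_dist_natCast (n : ℕ) (μ : Measure (X × X)) [IsFiniteMeasure μ] :
    ∫ p, truncLog n (dist p.1 p.2) ∂μ =
      (∫⁻ p, min (logKernelPos p) n ∂μ).toReal
        - (∫⁻ p, ENNReal.ofReal (Real.log (dist p.1 p.2)) ∂μ).toReal := by
  rw [integral_eq_lintegral_pos_part_sub_lintegral_neg_part (integrable_truncLog_dist n μ)]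
  simp only [ofReal_truncLog_dist, ofReal_neg_truncLog n.cast_nonneg dist_nonneg,
    ENNReal.ofReal_natCast]

lemma metricLogEnergy_le {μ : Measure X} [IsFiniteMeasure μ] {A : ℝ}
    (h : ∀ n : ℕ, ∫ p, truncLog n (dist p.1 p.2) ∂(μ.prod μ) ≤ A) : metricLogEnergy μ ≤ A := by
  set N := ∫⁻ p, ENNReal.ofReal (Real.log (dist p.1 p.2)) ∂(μ.prod μ)
  set P : ℕ → ℝ≥0∞ := fun n => ∫⁻ p, min (logKernelPos p) n ∂(μ.prod μ)
  have hN_top : N ≠ ⊤ := lintegral_ofReal_log_dist_ne_top _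
  have hP_top (n : ℕ) : P n ≠ ⊤ := by
    refine ne_top_of_le_ne_top ?_ (lintegral_mono fun p => min_le_right _ _)
    simpa using ENNReal.mul_ne_top (ENNReal.natCast_ne_top n) (measure_ne_top _ _)
  have hP_le (n : ℕ) : (P n).toReal ≤ A + N.toReal := by
    linarith [integral_truncLog_dist_natCast n (μ.prod μ), h n]
  have hpos : ∫⁻ p, logKernelPos p ∂(μ.prod μ) ≤ ENNReal.ofReal (A + N.toReal) :=
    lintegral_le_of_forall_lintegral_min_natCast_le measurable_logKernelPos fun n =>
      (ENNReal.le_ofReal_iff_toReal_le (hP_top n) (ENNReal.toReal_nonneg.trans (hP_le n))).2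
        (hP_le n)
  refine EReal.sub_le_of_le_add ?_
  calc ((∫⁻ p, logKernelPos p ∂(μ.prod μ) : ℝ≥0∞) : EReal)
      ≤ (ENNReal.ofReal (A + N.toReal) : EReal) := EReal.coe_ennreal_le_coe_ennreal_iff.2 hpos
    _ = (A + N.toReal : ℝ) := by
        rw [EReal.coe_ennreal_ofReal, max_eq_left (ENNReal.toReal_nonneg.trans (hP_le 0))]
    _ = A + N := by rw [EReal.coe_add, EReal.coe_ennreal_toReal hN_top]

lemma exists_metricLogEnergy_le [Nonempty X] {A : ℝ}
    (hA : ∀ (n : ℕ) (μ : ProbabilityMeasure X),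
      ∃ x, ∫ y, truncLog n (dist x y) ∂(μ : Measure X) ≤ A) :
    ∃ μ : ProbabilityMeasure X, metricLogEnergy (μ : Measure X) ≤ A := by
  let k (n : ℕ) : C(X × X, ℝ) := ⟨fun p => truncLog n (dist p.1 p.2), by fun_prop⟩
  let S (n : ℕ) : Set (ProbabilityMeasure X) := {μ | ∫ p, k n p ∂((μ : Measure X).prod μ) ≤ A}
  have hS_closed (n : ℕ) : IsClosed (S n) :=
    isClosed_le (continuous_integral_prod_self (k n)) continuous_const
  have hS_nonempty (n : ℕ) : (S n).Nonempty :=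
    exists_integral_prod_self_le (k n) (fun x y => by simp [k, dist_comm]) (hA n)
  have hS_anti (n : ℕ) : S (n + 1) ⊆ S n := fun μ hμ =>
    (integral_mono (integrable_truncLog_dist n _) (integrable_truncLog_dist (n + 1 : ℕ) _)
      fun p => truncLog_mono_left (by simp) _).trans hμ
  obtain ⟨μ, hμ⟩ := IsCompact.nonempty_iInter_of_sequence_nonempty_isCompact_isClosed S hS_anti
    hS_nonempty (hS_closed 0).isCompact hS_closed
  exact ⟨μ, metricLogEnergy_le fun n => mem_iInter.1 hμ n⟩

end CompactSpace

lemma metricWienerV_le_metricLogEnergy {E : Set X} (hE : MeasurableSet E)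
    (μ : ProbabilityMeasure E) : metricWienerV E ≤ metricLogEnergy (μ : Measure E) := by
  have hemb : MeasurableEmbedding ((↑) : E → X) := .subtype_coe hE
  have hprob : IsProbabilityMeasure ((μ : Measure E).map ((↑) : E → X)) :=
    Measure.isProbabilityMeasure_map hemb.measurable.aemeasurable
  have hsupp : (μ : Measure E).map ((↑) : E → X) Eᶜ = 0 := by simp [hemb.map_apply]
  rw [← metricLogEnergy_map isometry_subtype_coe hemb]
  exact iInf_le_of_le _ (iInf₂_le hprob hsupp)

lemma neg_diam_le_metricWienerV {E : Set X} (hE : Bornology.IsBounded E) :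
    ((-diam E : ℝ) : EReal) ≤ metricWienerV E := by
  refine le_iInf fun μ => le_iInf₂ fun _ hμE => ?_
  have hmem : ∀ᵐ x ∂μ, x ∈ E := hμE
  have hneg : ∫⁻ p, ENNReal.ofReal (Real.log (dist p.1 p.2)) ∂(μ.prod μ)
      ≤ ENNReal.ofReal (diam E) := by
    calc ∫⁻ p, ENNReal.ofReal (Real.log (dist p.1 p.2)) ∂(μ.prod μ)
        ≤ ∫⁻ _, ENNReal.ofReal (diam E) ∂(μ.prod μ) := by
          refine lintegral_mono_ae ?_
          filter_upwards [Measure.quasiMeasurePreserving_fst.ae hmem,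
            Measure.quasiMeasurePreserving_snd.ae hmem] with p hp₁ hp₂
          gcongr
          exact (Real.log_le_self dist_nonneg).trans (dist_le_diam_of_mem hE hp₁ hp₂)
      _ = ENNReal.ofReal (diam E) := by simp
  calc ((-diam E : ℝ) : EReal) = 0 - (ENNReal.ofReal (diam E) : EReal) := by
        simp [EReal.coe_ennreal_ofReal, diam_nonneg]
    _ ≤ metricLogEnergy μ := EReal.sub_le_sub (EReal.coe_ennreal_nonneg _)
        (EReal.coe_ennreal_le_coe_ennreal_iff.2 hneg)

lemma metricLogCap_nonneg (E : Set X) : 0 ≤ metricLogCap E := by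
  unfold metricLogCap
  positivity

lemma exp_neg_le_metricLogCap {E : Set X} (hE : Bornology.IsBounded E) {A : ℝ}
    (hA : metricWienerV E ≤ A) : Real.exp (-A) ≤ metricLogCap E := by
  have htop : metricWienerV E ≠ ⊤ := ne_top_of_le_ne_top (EReal.coe_ne_top A) hA
  have hbot : metricWienerV E ≠ ⊥ :=
    ne_bot_of_le_ne_bot (EReal.coe_ne_bot _) (neg_diam_le_metricWienerV hE)
  rw [metricLogCap, if_neg htop]
  gcongr
  exact EReal.toReal_le_toReal hA hbot (EReal.coe_ne_top A)

end LogEnergy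

section Capacity

variable {X : Type*} [MetricSpace X] [MeasurableSpace X] [BorelSpace X] {s : ℝ} {E : Set X}

lemma exists_forall_measureReal_closedBall_le (hs : 0 < s) (hE : 0 < (hContent s E).toReal)
    (μ : Measure X) [IsProbabilityMeasure μ] :
    ∃ x ∈ E, ∀ r > 0,
      μ.real (closedBall x r) ≤ (r / ((hContent s E).toReal ^ (1 / s) / 10)) ^ s := by
  obtain ⟨hE₀, hE_top⟩ := ENNReal.toReal_pos_iff.1 hE
  obtain ⟨x, hxE, hx⟩ :=
    exists_forall_hContent_mul_measure_closedBall_le hs hE₀.ne' hE_top.ne μ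
  refine ⟨x, hxE, fun r hr => ?_⟩
  have hball : (hContent s E).toReal * μ.real (closedBall x r) ≤ (10 * r) ^ s := by
    have := ENNReal.toReal_mono (by finiteness) (hx r hr)
    rwa [ENNReal.toReal_mul, measure_univ, one_mul, ← ENNReal.toReal_rpow,
      ENNReal.toReal_ofReal (by positivity)] at this
  calc μ.real (closedBall x r) ≤ (10 * r) ^ s / (hContent s E).toReal := by
        rwa [le_div_iff₀' hE]
    _ = (r / ((hContent s E).toReal ^ (1 / s) / 10)) ^ s := by
        rw [div_div_eq_mul_div, mul_comm r, Real.div_rpow (by positivity) (by positivity),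
          ← Real.rpow_mul hE.le, one_div_mul_cancel hs.ne', Real.rpow_one]

lemma exists_integral_truncLog_dist_le (hs : 0 < s) (hE : IsCompact E)
    (hE_pos : 0 < (hContent s E).toReal) (M : ℝ) (μ : Measure E) [IsProbabilityMeasure μ] :
    ∃ x : E, ∫ y, truncLog M (dist x y) ∂μ
      ≤ 1 / s - Real.log ((hContent s E).toReal ^ (1 / s) / 10) := by
  have : CompactSpace E := isCompact_iff_compactSpace.1 hE
  have hval : Measurable ((↑) : E → X) := measurable_subtype_coe
  have := Measure.isProbabilityMeasure_map (μ := μ) hval.aemeasurable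
  obtain ⟨x, hxE, hx⟩ := exists_forall_measureReal_closedBall_le hs hE_pos (μ.map (↑))
  refine ⟨⟨x, hxE⟩, integral_truncLog_le hs (by positivity)
    (integrable_of_compactSpace (by fun_prop)) fun r hr => ?_⟩
  refine le_of_eq_of_le ?_ (hx r hr)
  rw [map_measureReal_apply hval measurableSet_closedBall]
  simp [closedBall, Subtype.dist_eq, dist_comm]

theorem stmt_3_general (hs : 0 < s) (hE : IsCompact E) :
    Real.exp (-(1 / s)) / 10 * (hContent s E).toReal ^ (1 / s) ≤ metricLogCap E := by
  rcases (ENNReal.toReal_nonneg (a := hContent s E)).eq_or_lt with hE₀ | hE_pos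
  · rw [← hE₀, Real.zero_rpow (one_div_pos.2 hs).ne', mul_zero]
    exact metricLogCap_nonneg E
  set ρ := (hContent s E).toReal ^ (1 / s) / 10
  have hρ : 0 < ρ := by positivity
  have : CompactSpace E := isCompact_iff_compactSpace.1 hE
  have : Nonempty E := nonempty_coe_sort.2 <|
    nonempty_of_hContent_ne_zero hs (ENNReal.toReal_pos_iff.1 hE_pos).1.ne'
  obtain ⟨μ, hμ⟩ := exists_metricLogEnergy_le fun n (ν : ProbabilityMeasure E) =>
    exists_integral_truncLog_dist_le hs hE hE_pos n ν
  calc Real.exp (-(1 / s)) / 10 * (hContent s E).toReal ^ (1 / s)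
      = Real.exp (-(1 / s)) * ρ := by ring
    _ = Real.exp (-(1 / s - Real.log ρ)) := by
        rw [neg_sub, sub_eq_neg_add, Real.exp_add, Real.exp_log hρ]
    _ ≤ metricLogCap E := exp_neg_le_metricLogCap hE.isBounded
        ((metricWienerV_le_metricLogEnergy hE.measurableSet μ).trans hμ)

end Capacity

lemma logEnergy_eq_metricLogEnergy (μ : Measure (EuclideanSpace ℝ (Fin 2))) :
    logEnergy μ = metricLogEnergy μ := by
  unfold logEnergy metricLogEnergy logKernelPos
  congr!

lemma logCap_eq_metricLogCap (F : Set (EuclideanSpace ℝ (Fin 2))) : logCap F = metricLogCap F := by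
  have hV : wienerV F = metricWienerV F := by
    simp only [wienerV, metricWienerV, logEnergy_eq_metricLogEnergy]
  unfold logCap metricLogCap
  congr!

/-- for compact `E ⊂ ℝ²` and `0 < s ≤ 2`,
`Cap_L(E) ≥ c(s) · (ℋ^s_∞(E))^{1/s}`. -/
theorem stmt_3 (s : ℝ) (hs : 0 < s) (hs2 : s ≤ 2) :
    ∃ c : ℝ, 0 < c ∧
      ∀ E : Set (EuclideanSpace ℝ (Fin 2)), IsCompact E →
        c * (hContent s E).toReal ^ (1 / s) ≤ logCap E :=
  ⟨Real.exp (-(1 / s)) / 10, by positivity, fun E hE =>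
    (stmt_3_general hs hE).trans_eq (logCap_eq_metricLogCap E).symm⟩
end
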